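/- Cisinski's invertibility criterion: in a precofibration category, a map f : A → B between cofibrant objects becomes an isomorphism in the homotopy category ho M = M[W⁻¹] if and only if there exist cofibrations f' : B → B' and f'' : B' → B'' such that f' ∘ f and f'' ∘ f' are weak equivalences. -/

import Mathlib

open CategoryTheory CategoryTheory.Limits

universe w v u

variable (C : Type u) [Category.{v} C] [HasInitial C]

/-- An Anderson–Brown–Cisinski precofibration category structure on `C`:
classes of weak equivalences `W` and cofibrations `Cof` satisfying the axioms CF1–CF4. -/
structure PrecofCat where
  /-- the class of weak equivalences -/
  W : MorphismProperty C
  /-- the class of cofibrations -/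
  Cof : MorphismProperty C
  /-- CF1: cofibrations are closed under composition -/
  cof_comp : ∀ {X Y Z : C} (f : X ⟶ Y) (g : Y ⟶ Z), Cof f → Cof g → Cof (f ≫ g)
  /-- CF1: the initial object is cofibrant -/
  initial_cofibrant : Cof (initial.to (⊥_ C))
  /-- CF1: isomorphisms are weak equivalences -/
  iso_W : ∀ {X Y : C} (f : X ⟶ Y), IsIso f → W f
  /-- CF1: isomorphisms with cofibrant domain are cofibrations -/
  iso_cof : ∀ {X Y : C} (f : X ⟶ Y), IsIso f → Cof (initial.to X) → Cof f
  /-- CF2: two-out-of-three -/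
  W_comp : ∀ {X Y Z : C} (f : X ⟶ Y) (g : Y ⟶ Z), W f → W g → W (f ≫ g)
  W_cancel_left : ∀ {X Y Z : C} (f : X ⟶ Y) (g : Y ⟶ Z), W f → W (f ≫ g) → W g
  W_cancel_right : ∀ {X Y Z : C} (f : X ⟶ Y) (g : Y ⟶ Z), W g → W (f ≫ g) → W f
  /-- CF3: pushouts of cofibrations with cofibrant corners exist -/
  pushout_exists : ∀ {A B X : C} (i : A ⟶ B) (f : A ⟶ X), Cof i →
      Cof (initial.to A) → Cof (initial.to X) →
      ∃ (D : C) (g : B ⟶ D) (j : X ⟶ D), IsPushout i f g j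
  /-- CF3: the pushout of a cofibration is a cofibration -/
  pushout_cof : ∀ {A B X D : C} (i : A ⟶ B) (f : A ⟶ X) (g : B ⟶ D) (j : X ⟶ D),
      Cof i → Cof (initial.to A) → Cof (initial.to X) → IsPushout i f g j → Cof j
  /-- CF3: the pushout of a trivial cofibration is a trivial cofibration -/
  pushout_triv_cof : ∀ {A B X D : C} (i : A ⟶ B) (f : A ⟶ X) (g : B ⟶ D) (j : X ⟶ D),
      Cof i → W i → Cof (initial.to A) → Cof (initial.to X) → IsPushout i f g j → W j
  /-- CF4: factorization of maps with cofibrant domain -/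
  factorization : ∀ {A B : C} (f : A ⟶ B), Cof (initial.to A) →
      ∃ (Z : C) (f' : A ⟶ Z) (r : Z ⟶ B), Cof f' ∧ W r ∧ f' ≫ r = f

variable {C}

/-- An object is cofibrant if the map from the initial object is a cofibration. -/
def PrecofCat.Cofibrant (P : PrecofCat C) (A : C) : Prop :=
  P.Cof (initial.to A)

/-!
For a cofibrant object `X`, call two maps `X ⟶ T` and `X ⟶ T'` with cofibrant targets equivalent
if a zigzag of weak equivalences under `X` connects `T` and `T'`. The equivalence classes form a
presheaf under precomposition, and the class of `𝟙 A` consists exactly of the weak equivalences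
from `A` to a cofibrant object. Along a trivial cofibration precomposition has a left adjoint, the
cobase change, so it is bijective on classes; by Ken Brown's lemma the presheaf inverts all weak
equivalences between cofibrant objects, hence it has a left derived functor on the homotopy
category. If `f : A ⟶ B` becomes invertible there, precomposition with `f` is therefore bijective on
classes, and a preimage of `[𝟙 A]` is represented by a map `b : B ⟶ T` with `f ≫ b` a weak
equivalence. Factoring `b` gives `f'`, and the same argument applied to `f'` gives `f''`. The
converse is the two-out-of-six property of isomorphisms.
-/

theorem isIso_of_isIso_comp_of_isIso_comp {D : Type*} [Category* D] {X Y Z T : D} (f : X ⟶ Y)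
    (g : Y ⟶ Z) (h : Z ⟶ T) [IsIso (f ≫ g)] [IsIso (g ≫ h)] : IsIso f := by
  have : Mono g := mono_of_mono g h
  have : IsSplitEpi g := IsSplitEpi.mk' ⟨inv (f ≫ g) ≫ f, by simp⟩
  have : IsIso g := isIso_of_mono_of_isSplitEpi g
  exact IsIso.of_isIso_comp_right f g

namespace PrecofCat

variable (P : PrecofCat C)

section Cofibrations

variable {P}

lemma Cofibrant.of_cof {X Y : C} (hX : P.Cofibrant X) {i : X ⟶ Y} (hi : P.Cof i) :
    P.Cofibrant Y := by
  simpa only [Cofibrant, initial.to_comp] using P.cof_comp _ _ hX hi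

variable (P) in
lemma cofibrant_initial : P.Cofibrant (⊥_ C) := P.initial_cofibrant

variable (P) in
lemma W_id (X : C) : P.W (𝟙 X) := P.iso_W _ inferInstance

lemma Cofibrant.hasBinaryCoproduct {X Y : C} (hX : P.Cofibrant X) (hY : P.Cofibrant Y) :
    HasBinaryCoproduct X Y := by
  obtain ⟨K, i, j, hK⟩ := P.pushout_exists _ (initial.to Y) hX P.cofibrant_initial hY
  exact ⟨⟨_, isCoproductOfIsInitialIsPushout _ _ _ _ initialIsInitial hK.isColimit⟩⟩

lemma Cofibrant.cof_coprod_inl {X Y : C} [HasBinaryCoproduct X Y] (hX : P.Cofibrant X)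
    (hY : P.Cofibrant Y) : P.Cof (coprod.inl : X ⟶ X ⨿ Y) :=
  P.pushout_cof _ _ _ _ hY P.cofibrant_initial hX (IsPushout.of_hasBinaryCoproduct' X Y).flip

lemma Cofibrant.cof_coprod_inr {X Y : C} [HasBinaryCoproduct X Y] (hX : P.Cofibrant X)
    (hY : P.Cofibrant Y) : P.Cof (coprod.inr : Y ⟶ X ⨿ Y) :=
  P.pushout_cof _ _ _ _ hX P.cofibrant_initial hY (IsPushout.of_hasBinaryCoproduct' X Y)

lemma Cofibrant.coprod {X Y : C} [HasBinaryCoproduct X Y] (hX : P.Cofibrant X)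
    (hY : P.Cofibrant Y) : P.Cofibrant (X ⨿ Y) :=
  hX.of_cof (hX.cof_coprod_inl hY)

end Cofibrations

/-- Trivial cofibrations with cofibrant domain, the maps whose pushouts are controlled by CF3. -/
def trivCof : MorphismProperty C := fun X _ w => P.Cofibrant X ∧ P.Cof w ∧ P.W w

/-- Weak equivalences between cofibrant objects. A functor which inverts them has a left derived
functor on the homotopy category. -/
def cofibrantW : MorphismProperty C := fun X Y w => P.Cofibrant X ∧ P.Cofibrant Y ∧ P.W w

section Factorizations

variable {P}

lemma exists_cof_cof_factorization {Z Z' Y : C} (hZ : P.Cofibrant Z) (hZ' : P.Cofibrant Z')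
    (m : Z ⟶ Y) (q : Z' ⟶ Y) :
    ∃ (V : C) (v : Z ⟶ V) (i : Z' ⟶ V) (r : V ⟶ Y),
      P.Cof v ∧ P.Cof i ∧ P.W r ∧ v ≫ r = m ∧ i ≫ r = q := by
  have := hZ.hasBinaryCoproduct hZ'
  obtain ⟨V, k, r, hk, hr, hkr⟩ := P.factorization (coprod.desc m q) (hZ.coprod hZ')
  exact ⟨V, coprod.inl ≫ k, coprod.inr ≫ k, r, P.cof_comp _ _ (hZ.cof_coprod_inl hZ') hk,
    P.cof_comp _ _ (hZ.cof_coprod_inr hZ') hk, hr, by simp [hkr, coprod.inl_desc],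
    by simp [hkr, coprod.inr_desc]⟩

lemma exists_W_comp_eq_W_comp {K V V' Y : C} (hK : P.Cofibrant K) (hV' : P.Cofibrant V')
    {k : K ⟶ V} {k' : K ⟶ V'} {r : V ⟶ Y} {r' : V' ⟶ Y} (hk : P.Cof k) (hr : P.W r)
    (hr' : P.W r') (h : k ≫ r = k' ≫ r') :
    ∃ (T : C) (a : V ⟶ T) (b : V' ⟶ T), P.Cofibrant T ∧ P.W a ∧ P.W b ∧ k ≫ a = k' ≫ b := by
  obtain ⟨U, a, b, hU⟩ := P.pushout_exists k k' hk hK hV'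
  have hUc : P.Cofibrant U := hV'.of_cof (P.pushout_cof _ _ _ _ hk hK hV' hU)
  obtain ⟨T, l, q, hl, hq, hlq⟩ := P.factorization (hU.desc r r' h) hUc
  refine ⟨T, a ≫ l, b ≫ l, hUc.of_cof hl, P.W_cancel_right _ q hq ?_,
    P.W_cancel_right _ q hq ?_, by simp only [← Category.assoc, hU.w]⟩
  · simpa [hlq] using hr
  · simpa [hlq] using hr'

end Factorizations

section CofibrantReplacement

lemma exists_cofibrant_replacement (X : C) :
    ∃ (Z : C) (p : Z ⟶ X), P.Cofibrant Z ∧ P.W p := by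
  obtain ⟨Z, i, p, hi, hp, -⟩ := P.factorization (initial.to X) P.cofibrant_initial
  exact ⟨Z, p, P.cofibrant_initial.of_cof hi, hp⟩

/-- A chosen cofibrant replacement of `X`. It is not functorial in `X`. -/
noncomputable def cofRepl (X : C) : C := (P.exists_cofibrant_replacement X).choose

/-- The weak equivalence from the chosen cofibrant replacement of `X` to `X`. -/
noncomputable def cofReplMap (X : C) : P.cofRepl X ⟶ X :=
  (P.exists_cofibrant_replacement X).choose_spec.choose

lemma cofibrant_cofRepl (X : C) : P.Cofibrant (P.cofRepl X) :=
  (P.exists_cofibrant_replacement X).choose_spec.choose_spec.1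

lemma W_cofReplMap (X : C) : P.W (P.cofReplMap X) :=
  (P.exists_cofibrant_replacement X).choose_spec.choose_spec.2

end CofibrantReplacement

section Derived

variable {P} {D : Type*} [Category* D] {G : C ⥤ D}

/-- Ken Brown's lemma. -/
theorem isInvertedBy_cofibrantW_of_trivCof (hG : P.trivCof.IsInvertedBy G) :
    P.cofibrantW.IsInvertedBy G := by
  rintro X Y w ⟨hX, hY, hw⟩
  obtain ⟨V, v, i, r, hv, hi, hr, hvr, hir⟩ := exists_cof_cof_factorization hX hY w (𝟙 Y)
  have : IsIso (G.map v) := hG v ⟨hX, hv, P.W_cancel_right v r hr (hvr ▸ hw)⟩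
  have : IsIso (G.map i) := hG i ⟨hY, hi, P.W_cancel_right i r hr (hir ▸ P.W_id Y)⟩
  have : IsIso (G.map i ≫ G.map r) := by
    rw [← G.map_comp, hir]
    infer_instance
  have : IsIso (G.map r) := IsIso.of_isIso_comp_left (G.map i) _
  rw [← hvr, G.map_comp]
  infer_instance

variable (hG : P.cofibrantW.IsInvertedBy G)
include hG

/-- The map `φ` replaces `G.map m ≫ inv (G.map q)`: since `Y` need not be cofibrant, `G.map q` need
not be invertible. -/
theorem exists_comp_map_eq_map {Z Z' Y : C} (hZ : P.Cofibrant Z) (hZ' : P.Cofibrant Z')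
    (m : Z ⟶ Y) {q : Z' ⟶ Y} (hq : P.W q) :
    ∃ φ : G.obj Z ⟶ G.obj Z', ∀ {V : C} {v : Z ⟶ V} {i : Z' ⟶ V} {r : V ⟶ Y}, P.Cofibrant V →
      P.W r → v ≫ r = m → i ≫ r = q → φ ≫ G.map i = G.map v := by
  have := hZ.hasBinaryCoproduct hZ'
  have hK := hZ.coprod hZ'
  obtain ⟨V₀, k, r₀, hk, hr₀, hkr⟩ := P.factorization (coprod.desc m q) hK
  have hi₀ : P.W (coprod.inr ≫ k) := P.W_cancel_right _ r₀ hr₀ (by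
    simpa [hkr, coprod.inr_desc] using hq)
  have := hG _ ⟨hZ', hK.of_cof hk, hi₀⟩
  refine ⟨G.map (coprod.inl ≫ k) ≫ inv (G.map (coprod.inr ≫ k)),
    fun {V v i r} hV hr hv hi => ?_⟩
  obtain ⟨T, a, b, hT, -, hb, hab⟩ := exists_W_comp_eq_W_comp hK hV (k' := coprod.desc v i)
    hk hr₀ hr (by rw [hkr, coprod.desc_comp, hv, hi])
  have hva : (coprod.inl ≫ k) ≫ a = v ≫ b := by simp [hab, coprod.inl_desc]
  have hia : (coprod.inr ≫ k) ≫ a = i ≫ b := by simp [hab, coprod.inr_desc]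
  have := hG b ⟨hV, hT, hb⟩
  rw [← cancel_mono (G.map b), Category.assoc, ← G.map_comp i, ← hia, G.map_comp _ a,
    Category.assoc, IsIso.inv_hom_id_assoc, ← G.map_comp, ← G.map_comp, hva]

/-- The action on maps of the left derived functor of `G`, computed on the chosen cofibrant
replacements. -/
noncomputable def leftDerivedMap {X Y : C} (g : X ⟶ Y) :
    G.obj (P.cofRepl X) ⟶ G.obj (P.cofRepl Y) :=
  (exists_comp_map_eq_map hG (P.cofibrant_cofRepl X) (P.cofibrant_cofRepl Y)
    (P.cofReplMap X ≫ g) (P.W_cofReplMap Y)).choose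

lemma leftDerivedMap_comp_map {X Y V : C} {g : X ⟶ Y} {v : P.cofRepl X ⟶ V}
    {i : P.cofRepl Y ⟶ V} {r : V ⟶ Y} (hV : P.Cofibrant V) (hr : P.W r)
    (hv : v ≫ r = P.cofReplMap X ≫ g) (hi : i ≫ r = P.cofReplMap Y) :
    leftDerivedMap hG g ≫ G.map i = G.map v :=
  (exists_comp_map_eq_map hG (P.cofibrant_cofRepl X) (P.cofibrant_cofRepl Y)
    (P.cofReplMap X ≫ g) (P.W_cofReplMap Y)).choose_spec hV hr hv hi

lemma leftDerivedMap_id (X : C) :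
    leftDerivedMap hG (𝟙 X) = 𝟙 (G.obj (P.cofRepl X)) := by
  simpa using leftDerivedMap_comp_map hG (g := 𝟙 X) (v := 𝟙 _) (i := 𝟙 _)
    (P.cofibrant_cofRepl X) (P.W_cofReplMap X) (by simp) (by simp)

lemma leftDerivedMap_comp {X Y Z : C} (g : X ⟶ Y) (h : Y ⟶ Z) :
    leftDerivedMap hG (g ≫ h) = leftDerivedMap hG g ≫ leftDerivedMap hG h := by
  have hY := P.cofibrant_cofRepl Y
  obtain ⟨V, v, i, r, hv, hi, hr, hvr, hir⟩ := exists_cof_cof_factorization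
    (P.cofibrant_cofRepl X) hY (P.cofReplMap X ≫ g) (P.cofReplMap Y)
  obtain ⟨V', v', i', r', hv', -, hr', hvr', hir'⟩ := exists_cof_cof_factorization
    hY (P.cofibrant_cofRepl Z) (P.cofReplMap Y ≫ h) (P.cofReplMap Z)
  have hV' := hY.of_cof hv'
  have hiW : P.W i := P.W_cancel_right i r hr (hir ▸ P.W_cofReplMap Y)
  have hiW' : P.W i' := P.W_cancel_right i' r' hr' (hir' ▸ P.W_cofReplMap Z)
  obtain ⟨U, a, b, hU⟩ := P.pushout_exists i v' hi hY hV'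
  have hbW : P.W b := P.pushout_triv_cof _ _ _ _ hi hiW hY hV' hU
  have hUc : P.Cofibrant U := hV'.of_cof (P.pushout_cof _ _ _ _ hi hY hV' hU)
  obtain ⟨s, has, hbs⟩ := hU.exists_desc (r ≫ h) r' (by rw [reassoc_of% hir, hvr'])
  have hs : P.W s := P.W_cancel_left b s hbW (hbs ▸ hr')
  have := hG (i' ≫ b) ⟨P.cofibrant_cofRepl Z, hUc, P.W_comp _ _ hiW' hbW⟩
  rw [← cancel_mono (G.map (i' ≫ b))]
  calc leftDerivedMap hG (g ≫ h) ≫ G.map (i' ≫ b)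
      = G.map (v ≫ a) := leftDerivedMap_comp_map hG hUc hs
        (by rw [Category.assoc, has, reassoc_of% hvr]) (by rw [Category.assoc, hbs, hir'])
    _ = leftDerivedMap hG g ≫ G.map (i ≫ a) := by
        rw [G.map_comp, G.map_comp, ← Category.assoc, leftDerivedMap_comp_map hG
          ((P.cofibrant_cofRepl X).of_cof hv) hr hvr hir]
    _ = (leftDerivedMap hG g ≫ leftDerivedMap hG h) ≫ G.map (i' ≫ b) := by
        rw [hU.w, G.map_comp, G.map_comp, ← leftDerivedMap_comp_map hG hV' hr' hvr' hir']
        simp only [Category.assoc]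

lemma isIso_leftDerivedMap {X Y : C} {g : X ⟶ Y} (hg : P.W g) :
    IsIso (leftDerivedMap hG g) := by
  have hX := P.cofibrant_cofRepl X
  have hY := P.cofibrant_cofRepl Y
  obtain ⟨V, v, i, r, hv, -, hr, hvr, hir⟩ :=
    exists_cof_cof_factorization hX hY (P.cofReplMap X ≫ g) (P.cofReplMap Y)
  have hV := hX.of_cof hv
  have := hG i ⟨hY, hV, P.W_cancel_right i r hr (hir ▸ P.W_cofReplMap Y)⟩
  have := hG v ⟨hX, hV, P.W_cancel_right v r hr (hvr ▸ P.W_comp _ _ (P.W_cofReplMap X) hg)⟩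
  have : IsIso (leftDerivedMap hG g ≫ G.map i) := by
    rwa [leftDerivedMap_comp_map hG hV hr hvr hir]
  exact IsIso.of_isIso_comp_right _ (G.map i)

/-- The left derived functor of `G`, before descending to the homotopy category. -/
noncomputable def leftDerived : C ⥤ D where
  obj X := G.obj (P.cofRepl X)
  map g := leftDerivedMap hG g
  map_id X := leftDerivedMap_id hG X
  map_comp g h := leftDerivedMap_comp hG g h

lemma isInvertedBy_leftDerived : P.W.IsInvertedBy (leftDerived hG) :=
  fun _ _ _ hg => isIso_leftDerivedMap hG hg

lemma isIso_map_of_isIso_leftDerived_map {A B : C} (hA : P.Cofibrant A) (hB : P.Cofibrant B)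
    (f : A ⟶ B) [IsIso ((leftDerived hG).map f)] : IsIso (G.map f) := by
  have hπ : leftDerivedMap hG f ≫ G.map (P.cofReplMap B) = G.map (P.cofReplMap A ≫ f) :=
    leftDerivedMap_comp_map hG hB (P.W_id B) (Category.comp_id _) (Category.comp_id _)
  have := hG _ ⟨P.cofibrant_cofRepl A, hA, P.W_cofReplMap A⟩
  have := hG _ ⟨P.cofibrant_cofRepl B, hB, P.W_cofReplMap B⟩
  have : IsIso (leftDerivedMap hG f) := inferInstanceAs (IsIso ((leftDerived hG).map f))
  have : IsIso (G.map (P.cofReplMap A) ≫ G.map f) := by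
    rw [← G.map_comp, ← hπ]
    infer_instance
  exact IsIso.of_isIso_comp_left (G.map (P.cofReplMap A)) _

theorem isIso_map_of_isIso_localization_map {E : Type*} [Category* E] (L : C ⥤ E)
    [L.IsLocalization P.W] {A B : C} (hA : P.Cofibrant A) (hB : P.Cofibrant B) (f : A ⟶ B)
    [IsIso (L.map f)] : IsIso (G.map f) := by
  have : IsIso ((leftDerived hG).map f) := by
    rw [← NatIso.isIso_map_iff (Localization.fac _ (isInvertedBy_leftDerived hG) L) f,
      Functor.comp_map]
    infer_instance
  exact isIso_map_of_isIso_leftDerived_map hG hA hB f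

end Derived

/-- A map out of `X` with cofibrant target, an object of the category of cofibrant objects
under `X`. -/
structure CofUnder (X : C) where
  /-- the cofibrant target -/
  target : C
  /-- the map out of `X` -/
  hom : X ⟶ target
  cofibrant : P.Cofibrant target

namespace CofUnder

variable {P} {X Y Z : C}

/-- The existence of a weak equivalence under `X`. This relation is not symmetric; it generates the
equivalence relation defining `Classes`. -/
def Step (d e : P.CofUnder X) : Prop :=
  ∃ w : d.target ⟶ e.target, P.W w ∧ d.hom ≫ w = e.hom

lemma Step.W_hom_iff {d e : P.CofUnder X} (h : Step d e) : P.W d.hom ↔ P.W e.hom := by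
  obtain ⟨w, hw, hde⟩ := h
  exact ⟨fun hd => hde ▸ P.W_comp _ _ hd hw, fun he => P.W_cancel_right _ w hw (hde ▸ he)⟩

lemma Step.refl (d : P.CofUnder X) : Step d d := ⟨𝟙 _, P.W_id _, Category.comp_id _⟩

lemma Step.trans {d e e' : P.CofUnder X} (h : Step d e) (h' : Step e e') : Step d e' := by
  obtain ⟨w, hw, hde⟩ := h
  obtain ⟨w', hw', hee'⟩ := h'
  exact ⟨w ≫ w', P.W_comp _ _ hw hw', by rw [← Category.assoc, hde, hee']⟩

/-- Precomposition with `f`. -/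
def precomp (f : X ⟶ Y) (d : P.CofUnder Y) : P.CofUnder X where
  target := d.target
  hom := f ≫ d.hom
  cofibrant := d.cofibrant

lemma precomp_id (d : P.CofUnder X) : d.precomp (𝟙 X) = d := by
  simp only [precomp, Category.id_comp]

lemma precomp_comp (f : X ⟶ Y) (g : Y ⟶ Z) (d : P.CofUnder Z) :
    d.precomp (f ≫ g) = (d.precomp g).precomp f := by
  simp only [precomp, Category.assoc]

lemma Step.precomp (f : X ⟶ Y) {d e : P.CofUnder Y} (h : Step d e) :
    Step (d.precomp f) (e.precomp f) := by
  obtain ⟨w, hw, hde⟩ := h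
  exact ⟨w, hw, (Category.assoc _ _ _).trans (f ≫= hde)⟩

/-- Cobase change along a trivial cofibration is left adjoint to precomposition: its unit is a
step, and a step into a precomposite transposes to a step. -/
theorem exists_cobaseChange {w : X ⟶ Y} (hw : P.trivCof w) (d : P.CofUnder X) :
    ∃ d' : P.CofUnder Y, Step d (d'.precomp w) ∧
      ∀ e : P.CofUnder Y, Step d (e.precomp w) → Step d' e := by
  obtain ⟨hX, hwCof, hwW⟩ := hw
  obtain ⟨T, y, t, hT⟩ := P.pushout_exists w d.hom hwCof hX d.cofibrant
  have ht : P.W t := P.pushout_triv_cof _ _ _ _ hwCof hwW hX d.cofibrant hT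
  refine ⟨⟨T, y, d.cofibrant.of_cof (P.pushout_cof _ _ _ _ hwCof hX d.cofibrant hT)⟩,
    ⟨t, ht, hT.w.symm⟩, fun e ⟨a, ha, hae⟩ => ?_⟩
  obtain ⟨b, hyb, htb⟩ := hT.exists_desc e.hom a hae.symm
  exact ⟨b, P.W_cancel_left t b ht (htb ▸ ha), hyb⟩

variable (P) in
/-- The set of connected components of the category of cofibrant objects and weak equivalences
under `X`. -/
def Classes (X : C) : Type (max u v) := Quot (Step (P := P) (X := X))

/-- Precomposition with `f` on classes. -/
def Classes.precomp (f : X ⟶ Y) : Classes P Y → Classes P X :=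
  Quot.map (CofUnder.precomp f) fun _ _ => Step.precomp f

theorem Classes.bijective_precomp {w : X ⟶ Y} (hw : P.trivCof w) :
    Function.Bijective (Classes.precomp w : Classes P Y → Classes P X) := by
  choose push unit transpose using exists_cobaseChange hw
  let pushClass : Classes P X → Classes P Y :=
    Quot.map push fun d e h => transpose d _ (h.trans (unit e))
  refine Function.bijective_iff_has_inverse.2 ⟨pushClass, ?_, ?_⟩
  · rintro ⟨d⟩
    exact Quot.sound (transpose _ d (Step.refl _))
  · rintro ⟨d⟩
    exact (Quot.sound (unit d)).symm

variable (P) in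
/-- The presheaf of classes of maps into cofibrant objects. -/
def classesFunctor : Cᵒᵖ ⥤ Type (max u v) where
  obj X := Classes P X.unop
  map f := TypeCat.ofHom (Classes.precomp f.unop)
  map_id X := by
    ext ⟨d⟩
    exact congrArg (Quot.mk Step) d.precomp_id
  map_comp f g := by
    ext ⟨d⟩
    exact congrArg (Quot.mk Step) (precomp_comp g.unop f.unop d)

variable (P) in
lemma isInvertedBy_classesFunctor : P.trivCof.IsInvertedBy (classesFunctor P).rightOp :=
  MorphismProperty.IsInvertedBy.rightOp fun _ _ _ hw =>
    (isIso_iff_bijective _).2 (Classes.bijective_precomp hw)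

lemma W_hom_iff_of_mk_eq {d e : P.CofUnder X} (h : Quot.mk Step d = Quot.mk Step e) :
    P.W d.hom ↔ P.W e.hom :=
  iff_of_eq (congrArg (Quot.lift (fun d : P.CofUnder X => P.W d.hom)
    fun _ _ h => propext h.W_hom_iff) h)

end CofUnder

section Invertibility

variable {P} {E : Type*} [Category* E] (L : C ⥤ E) [L.IsLocalization P.W] {A B : C}

theorem bijective_precomp_of_isIso_localization_map (hA : P.Cofibrant A) (hB : P.Cofibrant B)
    (f : A ⟶ B) [IsIso (L.map f)] :
    Function.Bijective (CofUnder.Classes.precomp f :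
      CofUnder.Classes P B → CofUnder.Classes P A) := by
  have : IsIso ((CofUnder.classesFunctor P).rightOp.map f) :=
    isIso_map_of_isIso_localization_map
      (isInvertedBy_cofibrantW_of_trivCof (CofUnder.isInvertedBy_classesFunctor P)) L hA hB f
  exact (isIso_iff_bijective _).1 ((isIso_op_iff ((CofUnder.classesFunctor P).map f.op)).1 this)

theorem exists_cof_comp_W (hA : P.Cofibrant A) (hB : P.Cofibrant B) (f : A ⟶ B)
    [IsIso (L.map f)] : ∃ (B' : C) (f' : B ⟶ B'), P.Cof f' ∧ P.W (f ≫ f') := by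
  obtain ⟨⟨b⟩, hb⟩ := (bijective_precomp_of_isIso_localization_map L hA hB f).2
    (Quot.mk _ ⟨A, 𝟙 A, hA⟩)
  have hfb : P.W (f ≫ b.hom) := (CofUnder.W_hom_iff_of_mk_eq hb).2 (P.W_id A)
  obtain ⟨B', f', r, hf', hr, hfr⟩ := P.factorization b.hom hB
  exact ⟨B', f', hf', P.W_cancel_right _ r hr (by rwa [Category.assoc, hfr])⟩

end Invertibility

end PrecofCat

/-- Cisinski's invertibility criterion: a map `f : A ⟶ B` between cofibrant objects of a
precofibration category becomes an isomorphism in the homotopy category (the localization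
of `M` at `W`) if and only if there are cofibrations `f' : B ⟶ B'` and `f'' : B' ⟶ B''`
with `f' ∘ f` and `f'' ∘ f'` weak equivalences. -/
theorem cisinski_invertibility (P : PrecofCat C) {A B : C} (f : A ⟶ B)
    (hA : P.Cofibrant A) (hB : P.Cofibrant B) :
    IsIso (P.W.Q.map f) ↔
      ∃ (B' B'' : C) (f' : B ⟶ B') (f'' : B' ⟶ B''),
        P.Cof f' ∧ P.Cof f'' ∧ P.W (f ≫ f') ∧ P.W (f' ≫ f'') := by
  constructor
  · intro hf
    obtain ⟨B', f', hf', hff'⟩ := PrecofCat.exists_cof_comp_W P.W.Q hA hB f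
    have : IsIso (P.W.Q.map f ≫ P.W.Q.map f') := P.W.Q.map_comp f f' ▸ P.W.Q_inverts _ hff'
    have : IsIso (P.W.Q.map f') := IsIso.of_isIso_comp_left (P.W.Q.map f) _
    obtain ⟨B'', f'', hf'', hff''⟩ :=
      PrecofCat.exists_cof_comp_W P.W.Q hB (hB.of_cof hf') f'
    exact ⟨B', B'', f', f'', hf', hf'', hff', hff''⟩
  · rintro ⟨B', B'', f', f'', -, -, hff', hff''⟩
    have : IsIso (P.W.Q.map f ≫ P.W.Q.map f') := P.W.Q.map_comp f f' ▸ P.W.Q_inverts _ hff'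
    have : IsIso (P.W.Q.map f' ≫ P.W.Q.map f'') :=
      P.W.Q.map_comp f' f'' ▸ P.W.Q_inverts _ hff''
    exact isIso_of_isIso_comp_of_isIso_comp _ (P.W.Q.map f') (P.W.Q.map f'')
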